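/- Single-step expectation identity for the proxy reward: for every 0 ≤ i ≤ T − 1, assuming ρ_i^π(s) > 0 for every state s ∈ S, the expected one-step proxy reward equals the expected increment of the sub-trajectory reward: Σ_{s∈S} Σ_{a∈A} ρ_i^π(s) π(a|s) r̂_i^π(s,a) = Σ_{τ_{0:i+1}} 𝒯_{i+1}^π(τ_{0:i+1}) R_sub(τ_{0:i+1}) − Σ_{τ_{0:i}} 𝒯_i^π(τ_{0:i}) R_sub(τ_{0:i}). -/

import Mathlib

open Finset

/-- Trajectory distribution 𝒯_t^π. -/
noncomputable def Ttraj {S A : Type*} (ρ0 : S → ℝ) (P : S → A → S → ℝ)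
    (pol : S → A → ℝ) : (t : ℕ) → (Fin t → S × A) → ℝ
  | 0, _ => 1
  | t + 1, τ =>
      ρ0 (τ 0).1 * pol (τ 0).1 (τ 0).2 *
        ∏ i : Fin t,
          (P (τ i.castSucc).1 (τ i.castSucc).2 (τ i.succ).1 *
            pol (τ i.succ).1 (τ i.succ).2)

/-- On-policy state distribution ρ_t^π. -/
noncomputable def rhoPi {S A : Type*} [Fintype S] [Fintype A] (ρ0 : S → ℝ)
    (P : S → A → S → ℝ) (pol : S → A → ℝ) : ℕ → S → ℝ
  | 0 => ρ0
  | t + 1 => fun s =>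
      ∑ τ : Fin (t + 1) → S × A,
        Ttraj ρ0 P pol (t + 1) τ * P (τ (Fin.last t)).1 (τ (Fin.last t)).2 s

/-- Conditioned sub-trajectory distribution Γ_t^π(τ|s). -/
noncomputable def GammaPi {S A : Type*} [Fintype S] [Fintype A] (ρ0 : S → ℝ)
    (P : S → A → S → ℝ) (pol : S → A → ℝ) :
    (t : ℕ) → (Fin t → S × A) → S → ℝ
  | 0, _, _ => 1
  | t + 1, τ, s =>
      Ttraj ρ0 P pol (t + 1) τ * P (τ (Fin.last t)).1 (τ (Fin.last t)).2 s /
        rhoPi ρ0 P pol (t + 1) s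

/-- Step-wise proxy reward r̂_t^π(s,a). -/
noncomputable def rhat {S A : Type*} [Fintype S] [Fintype A] (ρ0 : S → ℝ)
    (P : S → A → S → ℝ) (pol : S → A → ℝ)
    (Rsub : (t : ℕ) → (Fin t → S × A) → ℝ) (t : ℕ) (s : S) (a : A) : ℝ :=
  ∑ τ : Fin t → S × A,
    GammaPi ρ0 P pol t τ s * (Rsub (t + 1) (Fin.snoc τ (s, a)) - Rsub t τ)

/-- h-step transition kernel μ_h^π (junk value 0 at h = 0). -/
noncomputable def muStep {S A : Type*} [Fintype S] [Fintype A]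
    (P : S → A → S → ℝ) (pol : S → A → ℝ) : ℕ → S → A → S → ℝ
  | 0, _, _, _ => 0
  | 1, s, a, s' => P s a s'
  | h + 2, s, a, s'' =>
      ∑ s', ∑ a', muStep P pol (h + 1) s a s' * pol s' a' * P s' a' s''

/-!
The joint probability that the first `t` steps are `τ` and the next state is `s` factors in two
ways: it equals `ρ_t(s) Γ_t(τ | s)`, and multiplied by `π(a | s)` it is the trajectory probability
of `τ⌢(s, a)`. Hence `ρ_t(s) π(a | s) r̂_t(s, a)` is the sum over `τ` of the difference reward
weighted by the probability of `τ⌢(s, a)`. Summing over `s` and `a` gives the expectation of `R_sub`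
at time `t + 1` minus its expectation at time `t`, the latter because the trajectory distributions
are consistent under forgetting the last step. If `ρ_t(s) = 0`, every joint probability ending in
`s` vanishes by nonnegativity, so the value of `Γ_t(· | s)` does not matter there.
-/

theorem sum_fin_succ_arrow_eq_sum_snoc {α M : Type*} [Fintype α] [AddCommMonoid M] {n : ℕ}
    (f : (Fin (n + 1) → α) → M) :
    ∑ τ, f τ = ∑ x : α, ∑ τ : Fin n → α, f (Fin.snoc τ x) := by
  rw [← (Fin.snocEquiv fun _ : Fin (n + 1) ↦ α).sum_comp, Fintype.sum_prod_type]
  rfl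

/-- The probability that the first `t` state-action pairs are `τ` and the state at time `t` is `s`:
the joint law whose conditional on `s` is `GammaPi`. -/
noncomputable def trajStateProb {S A : Type*} (ρ0 : S → ℝ) (P : S → A → S → ℝ)
    (pol : S → A → ℝ) : (t : ℕ) → (Fin t → S × A) → S → ℝ
  | 0, _, s => ρ0 s
  | t + 1, τ, s =>
      Ttraj ρ0 P pol (t + 1) τ * P (τ (Fin.last t)).1 (τ (Fin.last t)).2 s

section

variable {S A : Type*} {ρ0 : S → ℝ} {P : S → A → S → ℝ} {pol : S → A → ℝ} {t : ℕ}

theorem Ttraj_succ_snoc (τ : Fin t → S × A) (s : S) (a : A) :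
    Ttraj ρ0 P pol (t + 1) (Fin.snoc τ (s, a)) = trajStateProb ρ0 P pol t τ s * pol s a := by
  cases t with
  | zero => simp [Ttraj, trajStateProb, Fin.snoc_zero]
  | succ t =>
    have snoc_zero : (Fin.snoc τ (s, a) : Fin (t + 2) → S × A) 0 = τ 0 :=
      Fin.snoc_apply_zero (α := fun _ ↦ S × A) (s, a) τ
    simp only [Ttraj, trajStateProb, Fin.prod_univ_castSucc (n := t), snoc_zero,
      Fin.succ_castSucc, Fin.succ_last, Fin.snoc_castSucc (α := fun _ ↦ S × A),
      Fin.snoc_last]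
    ring

theorem Ttraj_nonneg (hρ0 : ∀ s, 0 ≤ ρ0 s) (hP : ∀ s a s', 0 ≤ P s a s')
    (hpol : ∀ s a, 0 ≤ pol s a) (τ : Fin t → S × A) : 0 ≤ Ttraj ρ0 P pol t τ := by
  cases t with
  | zero => exact zero_le_one
  | succ t =>
    exact mul_nonneg (mul_nonneg (hρ0 _) (hpol _ _))
      (prod_nonneg fun _ _ ↦ mul_nonneg (hP _ _ _) (hpol _ _))

theorem trajStateProb_nonneg (hρ0 : ∀ s, 0 ≤ ρ0 s) (hP : ∀ s a s', 0 ≤ P s a s')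
    (hpol : ∀ s a, 0 ≤ pol s a) (τ : Fin t → S × A) (s : S) :
    0 ≤ trajStateProb ρ0 P pol t τ s := by
  cases t with
  | zero => exact hρ0 s
  | succ t => exact mul_nonneg (Ttraj_nonneg hρ0 hP hpol τ) (hP _ _ _)

variable [Fintype S]

theorem sum_state_trajStateProb (hρ0 : ∑ s, ρ0 s = 1) (hP : ∀ s a, ∑ s', P s a s' = 1)
    (τ : Fin t → S × A) : ∑ s, trajStateProb ρ0 P pol t τ s = Ttraj ρ0 P pol t τ := by
  cases t with
  | zero => exact hρ0
  | succ t => simp only [trajStateProb, ← mul_sum, hP, mul_one]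

variable [Fintype A]

theorem sum_Ttraj_succ_snoc (hρ0 : ∑ s, ρ0 s = 1) (hP : ∀ s a, ∑ s', P s a s' = 1)
    (hpol : ∀ s, ∑ a, pol s a = 1) (τ : Fin t → S × A) :
    ∑ x : S × A, Ttraj ρ0 P pol (t + 1) (Fin.snoc τ x) = Ttraj ρ0 P pol t τ := by
  simp only [Fintype.sum_prod_type, Ttraj_succ_snoc, ← mul_sum, hpol, mul_one,
    sum_state_trajStateProb hρ0 hP]

theorem sum_traj_trajStateProb (s : S) :
    ∑ τ, trajStateProb ρ0 P pol t τ s = rhoPi ρ0 P pol t s := by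
  cases t with
  | zero => simp [trajStateProb, rhoPi]
  | succ t => rfl

theorem trajStateProb_eq_zero_of_rhoPi_eq_zero (hρ0 : ∀ s, 0 ≤ ρ0 s)
    (hP : ∀ s a s', 0 ≤ P s a s') (hpol : ∀ s a, 0 ≤ pol s a) {s : S}
    (hs : rhoPi ρ0 P pol t s = 0) (τ : Fin t → S × A) : trajStateProb ρ0 P pol t τ s = 0 := by
  rw [← sum_traj_trajStateProb,
    sum_eq_zero_iff_of_nonneg fun τ _ ↦ trajStateProb_nonneg hρ0 hP hpol τ s] at hs
  exact hs τ (mem_univ τ)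

theorem rhoPi_mul_GammaPi (hρ0 : ∀ s, 0 ≤ ρ0 s) (hP : ∀ s a s', 0 ≤ P s a s')
    (hpol : ∀ s a, 0 ≤ pol s a) (τ : Fin t → S × A) (s : S) :
    rhoPi ρ0 P pol t s * GammaPi ρ0 P pol t τ s = trajStateProb ρ0 P pol t τ s := by
  cases t with
  | zero => exact mul_one (ρ0 s)
  | succ t =>
    exact mul_div_cancel_of_imp' fun hs ↦
      trajStateProb_eq_zero_of_rhoPi_eq_zero hρ0 hP hpol hs τ

theorem rhoPi_mul_pol_mul_rhat (hρ0 : ∀ s, 0 ≤ ρ0 s) (hP : ∀ s a s', 0 ≤ P s a s')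
    (hpol : ∀ s a, 0 ≤ pol s a) (Rsub : (t : ℕ) → (Fin t → S × A) → ℝ) (s : S) (a : A) :
    rhoPi ρ0 P pol t s * pol s a * rhat ρ0 P pol Rsub t s a =
      ∑ τ : Fin t → S × A, Ttraj ρ0 P pol (t + 1) (Fin.snoc τ (s, a)) *
        (Rsub (t + 1) (Fin.snoc τ (s, a)) - Rsub t τ) := by
  rw [rhat, mul_sum]
  refine sum_congr rfl fun τ _ ↦ ?_
  rw [Ttraj_succ_snoc, ← rhoPi_mul_GammaPi hρ0 hP hpol]
  ring

theorem sum_Ttraj_succ_mul_sub (hρ0 : ∑ s, ρ0 s = 1) (hP : ∀ s a, ∑ s', P s a s' = 1)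
    (hpol : ∀ s, ∑ a, pol s a = 1) (f : (Fin (t + 1) → S × A) → ℝ) (g : (Fin t → S × A) → ℝ) :
    ∑ x : S × A, ∑ τ : Fin t → S × A,
        Ttraj ρ0 P pol (t + 1) (Fin.snoc τ x) * (f (Fin.snoc τ x) - g τ) =
      ∑ τ, Ttraj ρ0 P pol (t + 1) τ * f τ - ∑ τ, Ttraj ρ0 P pol t τ * g τ := by
  have expect_prefix : ∑ x : S × A, ∑ τ : Fin t → S × A,
      Ttraj ρ0 P pol (t + 1) (Fin.snoc τ x) * g τ = ∑ τ, Ttraj ρ0 P pol t τ * g τ := by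
    rw [sum_comm]
    simp only [← sum_mul, sum_Ttraj_succ_snoc hρ0 hP hpol]
  simp only [mul_sub, sum_sub_distrib, expect_prefix,
    sum_fin_succ_arrow_eq_sum_snoc fun τ ↦ Ttraj ρ0 P pol (t + 1) τ * f τ]

end

theorem diaster_single_step_identity_general {S A : Type*} [Fintype S] [Fintype A]
    {ρ0 : S → ℝ} (hρ0nn : ∀ s, 0 ≤ ρ0 s) (hρ0sum : ∑ s, ρ0 s = 1)
    {P : S → A → S → ℝ} (hPnn : ∀ s a s', 0 ≤ P s a s') (hPsum : ∀ s a, ∑ s', P s a s' = 1)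
    {pol : S → A → ℝ} (hpolnn : ∀ s a, 0 ≤ pol s a) (hpolsum : ∀ s, ∑ a, pol s a = 1)
    (Rsub : (t : ℕ) → (Fin t → S × A) → ℝ) (t : ℕ) :
    ∑ s, ∑ a, rhoPi ρ0 P pol t s * pol s a * rhat ρ0 P pol Rsub t s a =
      ∑ τ, Ttraj ρ0 P pol (t + 1) τ * Rsub (t + 1) τ - ∑ τ, Ttraj ρ0 P pol t τ * Rsub t τ := by
  simp only [rhoPi_mul_pol_mul_rhat hρ0nn hPnn hpolnn]
  rw [← sum_Ttraj_succ_mul_sub hρ0sum hPsum hpolsum, Fintype.sum_prod_type]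

/-- Single-step expectation identity for the proxy reward: the expected one-step proxy
reward equals the expected increment of the sub-trajectory reward. -/
theorem diaster_single_step_identity {S A : Type*} [Fintype S] [Fintype A]
    [Nonempty S] [Nonempty A]
    (T : ℕ) (hT : 1 ≤ T)
    (ρ0 : S → ℝ) (hρ0nn : ∀ s, 0 ≤ ρ0 s) (hρ0sum : ∑ s, ρ0 s = 1)
    (P : S → A → S → ℝ) (hPnn : ∀ s a s', 0 ≤ P s a s')
    (hPsum : ∀ s a, ∑ s', P s a s' = 1)
    (pol : S → A → ℝ) (hpolnn : ∀ s a, 0 ≤ pol s a)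
    (hpolsum : ∀ s, ∑ a, pol s a = 1)
    (Rsub : (t : ℕ) → (Fin t → S × A) → ℝ)
    (hRsub0 : ∀ τ : Fin 0 → S × A, Rsub 0 τ = 0)
    (i : ℕ) (hi : i + 1 ≤ T)
    (hρpos : ∀ s, 0 < rhoPi ρ0 P pol i s) :
    ∑ s, ∑ a, rhoPi ρ0 P pol i s * pol s a * rhat ρ0 P pol Rsub i s a
      = (∑ τ : Fin (i + 1) → S × A, Ttraj ρ0 P pol (i + 1) τ * Rsub (i + 1) τ)
        - ∑ τ : Fin i → S × A, Ttraj ρ0 P pol i τ * Rsub i τ :=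
  diaster_single_step_identity_general hρ0nn hρ0sum hPnn hPsum hpolnn hpolsum Rsub i
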